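/- Let D be a finite set of distinct disks in the plane, let k ≥ 2 be an integer, and let p ∈ ℝ² be a point with depth_D(p) ≤ k that lies in d₁ ∩ d₂ for two distinct disks d₁, d₂ ∈ D. Let R ⊆ D be a random sample obtained by including each disk of D independently with probability 1/k. Then the probability that d₁ ∈ R, d₂ ∈ R, and depth_R(p) ≤ 2 is at least 1/(10k²). -/

import Mathlib

open Metric Set
open scoped Classical

noncomputable section

abbrev Plane : Type := EuclideanSpace ℝ (Fin 2)

/-- A disk is a closed ball of positive radius in the plane. -/
def IsDisk (d : Set Plane) : Prop :=
  ∃ (c : Plane) (r : ℝ), 0 < r ∧ d = Metric.closedBall c r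

/-- The depth of a point `p` in a finite family `D` of disks:
the number of disks of `D` containing `p`. -/
def diskDepth (D : Finset (Set Plane)) (p : Plane) : ℕ :=
  {d : Set Plane | d ∈ D ∧ p ∈ d}.ncard

/-- General position: no two boundary circles are tangent (meet in exactly one
point), and no three boundary circles pass through a common point.  (All disks
are automatically distinct, since `D` is a finite set of point sets.) -/
def GeneralPosition (D : Finset (Set Plane)) : Prop :=
  (∀ d₁ ∈ D, ∀ d₂ ∈ D, d₁ ≠ d₂ → ¬ ∃ p : Plane, frontier d₁ ∩ frontier d₂ = {p}) ∧
  (∀ d₁ ∈ D, ∀ d₂ ∈ D, ∀ d₃ ∈ D, d₁ ≠ d₂ → d₁ ≠ d₃ → d₂ ≠ d₃ →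
      frontier d₁ ∩ frontier d₂ ∩ frontier d₃ = ∅)

/-- The intersection graph of a finite family of disks: two distinct disks are
adjacent iff they intersect. -/
def IG (D : Finset (Set Plane)) : SimpleGraph {d // d ∈ D} :=
  SimpleGraph.fromRel (fun d₁ d₂ => (d₁.1 ∩ d₂.1).Nonempty)

/-- The ε-safe zone for disks `D` and attack set `B`: the set of points `p`
with `depth_{D∖B}(p) ≥ ε·depth_D(p)`. -/
def SafeZone (ε : ℝ) (D B : Finset (Set Plane)) : Set Plane :=
  {p | ε * (diskDepth D p : ℝ) ≤
        (({d : Set Plane | d ∈ D ∧ d ∉ B ∧ p ∈ d}).ncard : ℝ)}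

/-- Two points are ε-safely connected if they lie in the same topological
connected component of the ε-safe zone. -/
def SafelyConnected (ε : ℝ) (D B : Finset (Set Plane)) (p q : Plane) : Prop :=
  q ∈ connectedComponentIn (SafeZone ε D B) p

/-!
If `A` is the set of disks of `D` containing `p`, then `R ∩ A` and `R \ A` are independent, so
`R ∩ A = {d₁, d₂}` has probability exactly `q ^ 2 * (1 - q) ^ (|A| - 2)` with `q = 1 / k`.
This event keeps both disks and makes `p` have depth `2` in the sample, and since `|A| ≤ k` its
probability is at least `(1 - 1 / k) ^ (k - 1) / k ^ 2 ≥ 1 / (e * k ^ 2)`.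
-/

/-- The probability that a random subset of `D`, containing each element independently with
probability `q`, satisfies the event `E`. It is the sum of the weights of the outcomes in `E`. The
definition makes sense for `q` in any ring; it is a probability when `0 ≤ q ≤ 1`. -/
def sampleProb {α K : Type*} [Ring K] (q : K) (D : Finset α) (E : Finset α → Prop)
    [DecidablePred E] : K :=
  ∑ R ∈ D.powerset with E R, q ^ R.card * (1 - q) ^ (D.card - R.card)

section SampleProb

variable {α K : Type*} {D : Finset α}

theorem sampleProb_mono [Ring K] [PartialOrder K] [IsOrderedRing K] {q : K} (hq₀ : 0 ≤ q)
    (hq₁ : q ≤ 1) {E F : Finset α → Prop} [DecidablePred E] [DecidablePred F]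
    (hEF : ∀ R ⊆ D, E R → F R) :
    sampleProb q D E ≤ sampleProb q D F := by
  refine Finset.sum_le_sum_of_subset_of_nonneg (fun R hR ↦ ?_) fun R _ _ ↦
    mul_nonneg (pow_nonneg hq₀ _) (pow_nonneg (sub_nonneg.2 hq₁) _)
  rw [Finset.mem_filter, Finset.mem_powerset] at hR ⊢
  exact ⟨hR.1, hEF R hR.1 hR.2⟩

theorem filter_union_eq_left [DecidableEq α] {P : α → Prop} [DecidablePred P] {S T : Finset α}
    (hT : ∀ d ∈ T, P d) (hS : ∀ d ∈ S, ¬P d) : (T ∪ S).filter P = T := by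
  rw [Finset.filter_union, Finset.filter_true_of_mem hT, Finset.filter_false_of_mem hS,
    Finset.union_empty]

theorem filter_not_union_eq_right [DecidableEq α] {P : α → Prop} [DecidablePred P] {S T : Finset α}
    (hT : ∀ d ∈ T, P d) (hS : ∀ d ∈ S, ¬P d) : (T ∪ S).filter (¬P ·) = S := by
  rw [Finset.union_comm]
  exact filter_union_eq_left hS fun d hd ↦ not_not.2 (hT d hd)

theorem sum_powerset_filter_eq {M : Type*} [DecidableEq α] [AddCommMonoid M]
    (f : Finset α → M) (P : α → Prop) [DecidablePred P] {T : Finset α}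
    (hT : T ⊆ D.filter P) :
    ∑ R ∈ D.powerset with R.filter P = T, f R =
      ∑ S ∈ (D.filter (¬P ·)).powerset, f (T ∪ S) := by
  have hTP : ∀ d ∈ T, P d := fun d hd ↦ (Finset.mem_filter.1 (hT hd)).2
  have hSP : ∀ S ∈ (D.filter (¬P ·)).powerset, ∀ d ∈ S, ¬P d := fun S hS d hd ↦
    (Finset.mem_filter.1 (Finset.mem_powerset.1 hS hd)).2
  have split : ∀ R ∈ D.powerset.filter (·.filter P = T), T ∪ R.filter (¬P ·) = R := by
    intro R hR
    rw [← (Finset.mem_filter.1 hR).2, Finset.filter_union_filter_not_eq]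
  refine Finset.sum_nbij' (·.filter (¬P ·)) (T ∪ ·) (fun R hR ↦ ?_) (fun S hS ↦ ?_) split
    (fun S hS ↦ filter_not_union_eq_right hTP (hSP S hS)) fun R hR ↦ by rw [split R hR]
  · rw [Finset.mem_filter, Finset.mem_powerset] at hR
    exact Finset.mem_powerset.2 (Finset.filter_subset_filter _ hR.1)
  · rw [Finset.mem_filter, Finset.mem_powerset]
    exact ⟨Finset.union_subset (hT.trans (Finset.filter_subset _ _))
      ((Finset.mem_powerset.1 hS).trans (Finset.filter_subset _ _)),
      filter_union_eq_left hTP (hSP S hS)⟩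

theorem sampleProb_filter_eq [DecidableEq α] [CommRing K] (q : K) (P : α → Prop)
    [DecidablePred P] {T : Finset α} (hT : T ⊆ D.filter P) :
    sampleProb q D (·.filter P = T) =
      q ^ T.card * (1 - q) ^ ((D.filter P).card - T.card) := by
  set A := D.filter P
  set B := D.filter (¬P ·)
  have weight_union : ∀ S ∈ B.powerset,
      q ^ (T ∪ S).card * (1 - q) ^ (D.card - (T ∪ S).card) =
        q ^ T.card * (1 - q) ^ (A.card - T.card) *
          (q ^ S.card * (1 - q) ^ (B.card - S.card)) := by
    intro S hS
    have hSB : S ⊆ B := Finset.mem_powerset.1 hS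
    have hcard : (T ∪ S).card = T.card + S.card := Finset.card_union_of_disjoint
      ((Finset.disjoint_filter_filter_not D D P).mono hT hSB)
    have hexp : D.card - (T.card + S.card) = (A.card - T.card) + (B.card - S.card) := by
      have hAB : A.card + B.card = D.card := Finset.card_filter_add_card_filter_not P
      have := Finset.card_le_card hT
      have := Finset.card_le_card hSB
      omega
    rw [hcard, hexp, pow_add, pow_add, mul_mul_mul_comm]
  rw [sampleProb, sum_powerset_filter_eq _ P hT, Finset.sum_congr rfl weight_union,
    ← Finset.mul_sum, Finset.sum_pow_mul_eq_add_pow, add_sub_cancel, one_pow, mul_one]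

end SampleProb

theorem inv_exp_one_le_one_sub_one_div_pow {k : ℕ} (hk : 0 < k) :
    (Real.exp 1)⁻¹ ≤ (1 - 1 / (k : ℝ)) ^ (k - 1) := by
  obtain ⟨n, rfl⟩ := Nat.exists_eq_succ_of_ne_zero hk.ne'
  rcases n.eq_zero_or_pos with rfl | hn
  · simpa using inv_le_one_of_one_le₀ (Real.one_le_exp zero_le_one)
  have hinv : 1 - 1 / ((n + 1 : ℕ) : ℝ) = (1 + (n : ℝ)⁻¹)⁻¹ := by
    push_cast
    field_simp
    ring
  rw [Nat.succ_eq_add_one, Nat.add_sub_cancel, hinv, inv_pow]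
  exact inv_anti₀ (by positivity) Real.one_add_inv_pow_le_exp

theorem sample_keeps_shallow_edge_general {α : Type*} [DecidableEq α] {D T : Finset α}
    {P : α → Prop} [DecidablePred P] {k : ℕ} (hk : (D.filter P).card ≤ k) (hT : T.Nonempty)
    (hTD : T ⊆ D.filter P) :
    1 / (Real.exp 1 * (k : ℝ) ^ T.card) ≤
      sampleProb (1 / (k : ℝ)) D fun R ↦ T ⊆ R ∧ (R.filter P).card ≤ T.card := by
  have hT₁ : 1 ≤ T.card := hT.card_pos
  have hk₀ : 0 < k := hT₁.trans ((Finset.card_le_card hTD).trans hk)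
  have hq₀ : 0 ≤ 1 / (k : ℝ) := by positivity
  have hq₁ : 1 / (k : ℝ) ≤ 1 := by simpa using Nat.cast_inv_le_one (α := ℝ) k
  calc 1 / (Real.exp 1 * (k : ℝ) ^ T.card)
      = (1 / (k : ℝ)) ^ T.card * (Real.exp 1)⁻¹ := by
        rw [one_div_pow]
        field_simp
    _ ≤ (1 / (k : ℝ)) ^ T.card * (1 - 1 / (k : ℝ)) ^ (k - 1) := by
        gcongr
        exact inv_exp_one_le_one_sub_one_div_pow hk₀
    _ ≤ (1 / (k : ℝ)) ^ T.card * (1 - 1 / (k : ℝ)) ^ ((D.filter P).card - T.card) :=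
        mul_le_mul_of_nonneg_left
          (pow_le_pow_of_le_one (sub_nonneg.2 hq₁) (sub_le_self 1 hq₀)
            (tsub_le_tsub hk hT₁)) (by positivity)
    _ = sampleProb (1 / (k : ℝ)) D (·.filter P = T) := (sampleProb_filter_eq _ P hTD).symm
    _ ≤ _ := sampleProb_mono hq₀ hq₁ fun R _ hR ↦
        ⟨hR ▸ Finset.filter_subset P R, (congrArg Finset.card hR).le⟩

theorem diskDepth_eq_card_filter (D : Finset (Set Plane)) (p : Plane) :
    diskDepth D p = (D.filter (p ∈ ·)).card := by
  rw [diskDepth, ← Set.ncard_coe_finset, Finset.coe_filter]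

/-- Let `D` be a finite set of distinct disks, `k ≥ 2` an
integer, and `p` a point of depth at most `k` lying in `d₁ ∩ d₂` for distinct
`d₁, d₂ ∈ D`.  If `R ⊆ D` is a random sample including each disk independently
with probability `1/k`, then the probability that `d₁ ∈ R`, `d₂ ∈ R` and
`depth_R(p) ≤ 2` is at least `1/(10k²)`.  (The probability is written as a sum
of the binomial weights `(1/k)^{|R|}(1−1/k)^{|D|−|R|}` over the subsets `R` in
the event.) -/
theorem sample_keeps_shallow_edge (D : Finset (Set Plane))
    (hD : ∀ d ∈ D, IsDisk d) (k : ℕ) (hk : 2 ≤ k)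
    (p : Plane) (hdepth : diskDepth D p ≤ k)
    (d₁ d₂ : Set Plane) (h₁ : d₁ ∈ D) (h₂ : d₂ ∈ D) (hne : d₁ ≠ d₂)
    (hp₁ : p ∈ d₁) (hp₂ : p ∈ d₂) :
    (1 : ℝ) / (10 * (k : ℝ) ^ 2) ≤
      ∑ R ∈ D.powerset,
        (if d₁ ∈ R ∧ d₂ ∈ R ∧ diskDepth R p ≤ 2 then
          ((1 : ℝ) / k) ^ R.card * (1 - 1 / (k : ℝ)) ^ (D.card - R.card)
        else 0) := by
  have hpair : ({d₁, d₂} : Finset (Set Plane)) ⊆ D.filter (p ∈ ·) := by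
    simp [Finset.insert_subset_iff, h₁, h₂, hp₁, hp₂]
  calc (1 : ℝ) / (10 * (k : ℝ) ^ 2)
      ≤ 1 / (Real.exp 1 * (k : ℝ) ^ 2) := by
        gcongr
        linarith [Real.exp_one_lt_three]
    _ ≤ _ := by
        simpa only [sampleProb, Finset.sum_filter, Finset.card_pair hne, Finset.insert_subset_iff,
          Finset.singleton_subset_iff, and_assoc, diskDepth_eq_card_filter] using
          sample_keeps_shallow_edge_general (diskDepth_eq_card_filter D p ▸ hdepth)
            (Finset.insert_nonempty d₁ {d₂}) hpair
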